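/- arXiv:1811.06353 — 2 statements merged into one kernel-verified Lean document; each statement's English description precedes it below -/
import Mathlib

section
/- Let 0 ≤ a < b be real numbers, let ψ : (0,∞) → (0,∞) be twice differentiable with t ↦ t·ψ'(t)/ψ(t) increasing on (0,∞), let h : [a,b] → [0,∞) be a nonnegative integrable function, let δ > 0 and σ ∈ ℝ, σ ≠ 0. For z > 0 define K(z) = (∫_a^b t^{δ-1} h(t) (ψ(zt))^σ dt) / (∫_a^b t^{-1} h(t) (ψ(zt))^σ dt), assuming all integrals involved are finite and the denominator is positive for every z > 0. Then K is increasing on (0,∞) if σ > 0 and decreasing on (0,∞) if σ < 0. If instead t ↦ t·ψ'(t)/ψ(t) is decreasing on (0,∞), then K is decreasing if σ > 0 and increasing if σ < 0. -/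
open MeasureTheory

/-- The ratio `K(z)` of the two weighted integrals of the kernel `h` against powers of `ψ`. -/
noncomputable def Kratio (a b δ σ : ℝ) (ψ h : ℝ → ℝ) (z : ℝ) : ℝ :=
  (∫ t in a..b, t ^ (δ - 1) * h t * (ψ (z * t)) ^ σ) /
    (∫ t in a..b, t ^ (-1 : ℝ) * h t * (ψ (z * t)) ^ σ)

/-!
Passing from `ψ t` to `ψ (z * t)` turns the elasticity `t ψ'(t) / ψ(t)` into its value at `z * t`.
If the elasticity is increasing, `x ≤ y` and `σ > 0`, then `r t = (ψ (y * t) / ψ (x * t)) ^ σ` has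
nonnegative elasticity and is therefore increasing. Now `K x` is the mean of the increasing function
`t ^ δ` with respect to `t⁻¹ h(t) ψ(x t)^σ dt`, while `K y` is its mean after reweighting by `r`, so
Chebyshev's integral inequality gives `K x ≤ K y`. The sign of `σ` and the direction of monotonicity
of the elasticity enter only through the monotonicity of `σ t ψ'(t) / ψ(t)`, the elasticity of
`ψ ^ σ`.
-/

section Chebyshev

variable {α : Type*} [MeasurableSpace α] {μ : Measure α}

-- Iterated integration, unlike Fubini on `μ.prod μ`, needs no σ-finiteness.
theorem integral_mul_integral_le_of_ae_symm {A B C D : α → ℝ}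
    (hA : Integrable A μ) (hB : Integrable B μ) (hC : Integrable C μ) (hD : Integrable D μ)
    (h : ∀ᵐ s ∂μ, ∀ᵐ t ∂μ, A s * B t + B s * A t ≤ C s * D t + D s * C t) :
    (∫ t, A t ∂μ) * (∫ t, B t ∂μ) ≤ (∫ t, C t ∂μ) * (∫ t, D t ∂μ) := by
  have integrate {p q r s : ℝ} (hle : ∀ᵐ t ∂μ, p * B t + q * A t ≤ r * D t + s * C t) :
      p * (∫ t, B t ∂μ) + q * (∫ t, A t ∂μ) ≤ r * (∫ t, D t ∂μ) + s * (∫ t, C t ∂μ) := by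
    have hmono := integral_mono_ae ((hB.const_mul p).add (hA.const_mul q))
      ((hD.const_mul r).add (hC.const_mul s)) hle
    simpa only [Pi.add_apply, integral_add (hB.const_mul p) (hA.const_mul q),
      integral_add (hD.const_mul r) (hC.const_mul s), integral_const_mul] using hmono
  have once : ∀ᵐ s ∂μ, A s * (∫ t, B t ∂μ) + B s * (∫ t, A t ∂μ) ≤
      C s * (∫ t, D t ∂μ) + D s * (∫ t, C t ∂μ) :=
    h.mono fun _ => integrate
  have twice := integrate (p := ∫ t, A t ∂μ) (q := ∫ t, B t ∂μ) (r := ∫ t, C t ∂μ)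
    (s := ∫ t, D t ∂μ) (once.mono fun s hs => by linarith)
  linarith

theorem integral_mul_integral_le_of_monovaryOn {f g w : α → ℝ} {S : Set α}
    (hfg : MonovaryOn f g S) (hS : ∀ᵐ t ∂μ, t ∈ S) (hw : ∀ᵐ t ∂μ, 0 ≤ w t)
    (hwint : Integrable w μ) (hfw : Integrable (fun t => f t * w t) μ)
    (hgw : Integrable (fun t => g t * w t) μ)
    (hfgw : Integrable (fun t => f t * (g t * w t)) μ) :
    (∫ t, f t * w t ∂μ) * (∫ t, g t * w t ∂μ) ≤
      (∫ t, f t * (g t * w t) ∂μ) * (∫ t, w t ∂μ) := by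
  refine integral_mul_integral_le_of_ae_symm hfw hgw hfgw hwint ?_
  filter_upwards [hS, hw] with s hs hws
  filter_upwards [hS, hw] with t ht hwt
  have hvary : 0 ≤ (f t - f s) * (g t - g s) :=
    monovaryOn_iff_forall_mul_nonneg.1 hfg hs ht
  linarith [mul_nonneg (mul_nonneg hws hwt) hvary]

theorem integral_div_integral_le_of_monovaryOn {g r w₁ w₂ : α → ℝ} {S : Set α}
    (hgr : MonovaryOn g r S) (hS : ∀ᵐ t ∂μ, t ∈ S) (hw : ∀ᵐ t ∂μ, 0 ≤ w₁ t)
    (hr : ∀ᵐ t ∂μ, w₂ t = r t * w₁ t) (hw₁ : Integrable w₁ μ) (hw₂ : Integrable w₂ μ)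
    (hgw₁ : Integrable (fun t => g t * w₁ t) μ) (hgw₂ : Integrable (fun t => g t * w₂ t) μ)
    (hpos₁ : 0 < ∫ t, w₁ t ∂μ) (hpos₂ : 0 < ∫ t, w₂ t ∂μ) :
    (∫ t, g t * w₁ t ∂μ) / (∫ t, w₁ t ∂μ) ≤ (∫ t, g t * w₂ t ∂μ) / ∫ t, w₂ t ∂μ := by
  have hgr' : ∀ᵐ t ∂μ, g t * w₂ t = g t * (r t * w₁ t) := hr.mono fun t ht => by rw [ht]
  rw [div_le_div_iff₀ hpos₁ hpos₂, integral_congr_ae hr, integral_congr_ae hgr']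
  exact integral_mul_integral_le_of_monovaryOn hgr hS hw hw₁ hgw₁ (hw₂.congr hr)
    (hgw₂.congr hgr')

end Chebyshev

section Elasticity

/-- The elasticity `t f'(t) / f(t)` of `f` at `t`, that is, the derivative of `log f` with respect
to `log t`. The form `t * deriv f t / f t` is that of the hypotheses of `kratio_monotonicity`. -/
noncomputable def elasticity (f : ℝ → ℝ) (t : ℝ) : ℝ := t * deriv f t / f t

variable {f g : ℝ → ℝ} {t : ℝ}

theorem elasticity_comp_mul_left (f : ℝ → ℝ) (c t : ℝ) :
    elasticity (fun t => f (c * t)) t = elasticity f (c * t) := by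
  simp only [elasticity, deriv_comp_mul_left, smul_eq_mul]
  ring

theorem elasticity_div (hf : DifferentiableAt ℝ f t) (hg : DifferentiableAt ℝ g t)
    (hft : f t ≠ 0) (hgt : g t ≠ 0) :
    elasticity (fun t => f t / g t) t = elasticity f t - elasticity g t := by
  simp only [elasticity, deriv_fun_div hf hg hgt]
  field_simp

theorem elasticity_rpow (hf : DifferentiableAt ℝ f t) (hft : 0 < f t) (σ : ℝ) :
    elasticity (fun t => f t ^ σ) t = σ * elasticity f t := by
  simp only [elasticity, deriv_rpow_const hf (Or.inl hft.ne'), Real.rpow_sub_one hft.ne']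
  field_simp

theorem monotoneOn_of_elasticity_nonneg (hpos : ∀ t ∈ Set.Ioi (0 : ℝ), 0 < f t)
    (hdiff : DifferentiableOn ℝ f (Set.Ioi 0)) (h : ∀ t ∈ Set.Ioi (0 : ℝ), 0 ≤ elasticity f t) :
    MonotoneOn f (Set.Ioi 0) := by
  refine monotoneOn_of_deriv_nonneg (convex_Ioi 0) hdiff.continuousOn
    (hdiff.mono interior_subset) fun t ht => ?_
  rw [interior_Ioi] at ht
  have hderiv : deriv f t = elasticity f t * f t / t := by
    have hft : f t ≠ 0 := (hpos t ht).ne'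
    have ht0 : t ≠ 0 := (Set.mem_Ioi.1 ht).ne'
    simp only [elasticity]
    field_simp
  rw [hderiv]
  exact div_nonneg (mul_nonneg (h t ht) (hpos t ht).le) (Set.mem_Ioi.1 ht).le

theorem monotoneOn_div_comp_mul_left {x y : ℝ} (hx : 0 < x) (hy : 0 < y)
    (hpos : ∀ t ∈ Set.Ioi (0 : ℝ), 0 < f t) (hdiff : DifferentiableOn ℝ f (Set.Ioi 0))
    (h : ∀ t ∈ Set.Ioi (0 : ℝ), elasticity f (x * t) ≤ elasticity f (y * t)) :
    MonotoneOn (fun t => f (y * t) / f (x * t)) (Set.Ioi 0) := by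
  have hposc {c : ℝ} (hc : 0 < c) {t : ℝ} (ht : 0 < t) : 0 < f (c * t) := hpos _ (mul_pos hc ht)
  have hdiffc {c : ℝ} (hc : 0 < c) {t : ℝ} (ht : 0 < t) :
      DifferentiableAt ℝ (fun t => f (c * t)) t :=
    (hdiff.differentiableAt (Ioi_mem_nhds (mul_pos hc ht))).comp t
      (differentiableAt_id.const_mul c)
  refine monotoneOn_of_elasticity_nonneg (fun t ht => div_pos (hposc hy ht) (hposc hx ht))
    (fun t ht => ((hdiffc hy ht).fun_div (hdiffc hx ht)
      (hposc hx ht).ne').differentiableWithinAt) fun t ht => ?_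
  rw [elasticity_div (hdiffc hy ht) (hdiffc hx ht) (hposc hy ht).ne' (hposc hx ht).ne',
    elasticity_comp_mul_left, elasticity_comp_mul_left]
  exact sub_nonneg.2 (h t ht)

end Elasticity

section RescaledMean

/-- The mean of `g` with respect to the measure with density `w t * φ (z * t)` relative to `μ`. As
a function of the scale `z` it generalizes `Kratio`. -/
noncomputable def rescaledMean (μ : Measure ℝ) (g w φ : ℝ → ℝ) (z : ℝ) : ℝ :=
  (∫ t, g t * (w t * φ (z * t)) ∂μ) / ∫ t, w t * φ (z * t) ∂μ

variable {μ : Measure ℝ} {g w φ : ℝ → ℝ}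

theorem rescaledMean_le_rescaledMean {x y : ℝ} (hx : 0 < x) (hy : 0 < y)
    (hμ : ∀ᵐ t ∂μ, 0 < t) (hg : MonotoneOn g (Set.Ioi 0)) (hw : ∀ᵐ t ∂μ, 0 ≤ w t)
    (hφ : ∀ t ∈ Set.Ioi (0 : ℝ), 0 < φ t) (hdiff : DifferentiableOn ℝ φ (Set.Ioi 0))
    (hnumx : Integrable (fun t => g t * (w t * φ (x * t))) μ)
    (hnumy : Integrable (fun t => g t * (w t * φ (y * t))) μ)
    (hdenx : Integrable (fun t => w t * φ (x * t)) μ)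
    (hdeny : Integrable (fun t => w t * φ (y * t)) μ)
    (hdenposx : 0 < ∫ t, w t * φ (x * t) ∂μ) (hdenposy : 0 < ∫ t, w t * φ (y * t) ∂μ)
    (hle : ∀ t ∈ Set.Ioi (0 : ℝ), elasticity φ (x * t) ≤ elasticity φ (y * t)) :
    rescaledMean μ g w φ x ≤ rescaledMean μ g w φ y := by
  have hratio : MonotoneOn (fun t => φ (y * t) / φ (x * t)) (Set.Ioi 0) :=
    monotoneOn_div_comp_mul_left hx hy hφ hdiff hle
  refine integral_div_integral_le_of_monovaryOn (hg.monovaryOn hratio) hμ ?_ ?_ hdenx hdeny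
    hnumx hnumy hdenposx hdenposy
  · filter_upwards [hμ, hw] with t ht hwt using mul_nonneg hwt (hφ _ (mul_pos hx ht)).le
  · filter_upwards [hμ] with t ht
    rw [mul_left_comm, div_mul_cancel₀ _ (hφ _ (mul_pos hx ht)).ne']

end RescaledMean

section Kratio

variable {a b δ σ : ℝ} {ψ h : ℝ → ℝ}

theorem ae_restrict_Ioc_pos (ha : 0 ≤ a) : ∀ᵐ t ∂volume.restrict (Set.Ioc a b), 0 < t :=
  (ae_restrict_mem measurableSet_Ioc).mono fun _ ht => ha.trans_lt ht.1

theorem ae_rpow_sub_one_mul_eq (ha : 0 ≤ a) (δ : ℝ) (h k : ℝ → ℝ) :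
    (fun t => t ^ (δ - 1) * h t * k t) =ᵐ[volume.restrict (Set.Ioc a b)]
      fun t => t ^ δ * (t ^ (-1 : ℝ) * h t * k t) := by
  filter_upwards [ae_restrict_Ioc_pos ha] with t ht
  rw [sub_eq_add_neg, Real.rpow_add ht]
  ring

theorem Kratio_eq_rescaledMean (ha : 0 ≤ a) (hab : a ≤ b) (z : ℝ) :
    Kratio a b δ σ ψ h z = rescaledMean (volume.restrict (Set.Ioc a b)) (fun t => t ^ δ)
      (fun t => t ^ (-1 : ℝ) * h t) (fun t => ψ t ^ σ) z := by
  simp only [Kratio, rescaledMean, intervalIntegral.integral_of_le hab,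
    integral_congr_ae (ae_rpow_sub_one_mul_eq ha δ h fun t => ψ (z * t) ^ σ)]

theorem Kratio_le_Kratio {x y : ℝ} (hx : 0 < x) (hy : 0 < y)
    (ha : 0 ≤ a) (hab : a ≤ b) (hδ : 0 ≤ δ)
    (hψpos : ∀ t ∈ Set.Ioi (0 : ℝ), 0 < ψ t)
    (hψdiff : DifferentiableOn ℝ ψ (Set.Ioi 0))
    (hh : ∀ t ∈ Set.Icc a b, 0 ≤ h t)
    (hnum : ∀ z ∈ Set.Ioi (0 : ℝ),
      IntervalIntegrable (fun t => t ^ (δ - 1) * h t * (ψ (z * t)) ^ σ) volume a b)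
    (hden : ∀ z ∈ Set.Ioi (0 : ℝ),
      IntervalIntegrable (fun t => t ^ (-1 : ℝ) * h t * (ψ (z * t)) ^ σ) volume a b)
    (hdenpos : ∀ z ∈ Set.Ioi (0 : ℝ),
      0 < ∫ t in a..b, t ^ (-1 : ℝ) * h t * (ψ (z * t)) ^ σ)
    (hle : ∀ t ∈ Set.Ioi (0 : ℝ), σ * elasticity ψ (x * t) ≤ σ * elasticity ψ (y * t)) :
    Kratio a b δ σ ψ h x ≤ Kratio a b δ σ ψ h y := by
  have hdiffAt {t : ℝ} (ht : 0 < t) : DifferentiableAt ℝ ψ t :=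
    hψdiff.differentiableAt (Ioi_mem_nhds ht)
  have helast {t : ℝ} (ht : 0 < t) : elasticity (fun t => ψ t ^ σ) t = σ * elasticity ψ t :=
    elasticity_rpow (hdiffAt ht) (hψpos t ht) σ
  have hweight : ∀ᵐ t ∂volume.restrict (Set.Ioc a b), 0 ≤ t ^ (-1 : ℝ) * h t := by
    filter_upwards [ae_restrict_Ioc_pos ha, ae_restrict_mem measurableSet_Ioc] with t ht htab
    exact mul_nonneg (Real.rpow_nonneg ht.le _) (hh t (Set.Ioc_subset_Icc_self htab))
  have hnumint {z : ℝ} (hz : 0 < z) :=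
    (hnum z hz).1.congr (ae_rpow_sub_one_mul_eq ha δ h fun t => ψ (z * t) ^ σ)
  have hdenint {z : ℝ} (hz : 0 < z) := (hden z hz).1
  simp only [intervalIntegral.integral_of_le hab] at hdenpos
  rw [Kratio_eq_rescaledMean ha hab, Kratio_eq_rescaledMean ha hab]
  refine rescaledMean_le_rescaledMean hx hy (ae_restrict_Ioc_pos ha)
    ((Real.monotoneOn_rpow_Ici_of_exponent_nonneg hδ).mono Set.Ioi_subset_Ici_self) hweight
    (fun t ht => Real.rpow_pos_of_pos (hψpos t ht) σ)
    (hψdiff.rpow_const fun t ht => Or.inl (hψpos t ht).ne')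
    (hnumint hx) (hnumint hy) (hdenint hx) (hdenint hy) (hdenpos x hx) (hdenpos y hy)
    fun t ht => ?_
  rw [helast (mul_pos hx ht), helast (mul_pos hy ht)]
  exact hle t ht

end Kratio

theorem kratio_monotonicity_general (a b δ σ : ℝ) (ψ h : ℝ → ℝ)
    (ha : 0 ≤ a) (hab : a ≤ b) (hδ : 0 ≤ δ)
    (hψpos : ∀ t ∈ Set.Ioi (0 : ℝ), 0 < ψ t)
    (hψdiff : DifferentiableOn ℝ ψ (Set.Ioi 0))
    (hh : ∀ t ∈ Set.Icc a b, 0 ≤ h t)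
    (hnum : ∀ z ∈ Set.Ioi (0 : ℝ),
      IntervalIntegrable (fun t => t ^ (δ - 1) * h t * (ψ (z * t)) ^ σ) volume a b)
    (hden : ∀ z ∈ Set.Ioi (0 : ℝ),
      IntervalIntegrable (fun t => t ^ (-1 : ℝ) * h t * (ψ (z * t)) ^ σ) volume a b)
    (hdenpos : ∀ z ∈ Set.Ioi (0 : ℝ),
      0 < ∫ t in a..b, t ^ (-1 : ℝ) * h t * (ψ (z * t)) ^ σ) :
    (MonotoneOn (fun t => t * deriv ψ t / ψ t) (Set.Ioi 0) →
      ((0 < σ → MonotoneOn (Kratio a b δ σ ψ h) (Set.Ioi 0)) ∧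
        (σ < 0 → AntitoneOn (Kratio a b δ σ ψ h) (Set.Ioi 0)))) ∧
    (AntitoneOn (fun t => t * deriv ψ t / ψ t) (Set.Ioi 0) →
      ((0 < σ → AntitoneOn (Kratio a b δ σ ψ h) (Set.Ioi 0)) ∧
        (σ < 0 → MonotoneOn (Kratio a b δ σ ψ h) (Set.Ioi 0)))) := by
  have hK {x y : ℝ} (hx : 0 < x) (hy : 0 < y) :=
    Kratio_le_Kratio hx hy ha hab hδ hψpos hψdiff hh hnum hden hdenpos
  have hmono (hE : MonotoneOn (fun t => σ * elasticity ψ t) (Set.Ioi 0)) :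
      MonotoneOn (Kratio a b δ σ ψ h) (Set.Ioi 0) := fun x hx y hy hxy =>
    hK hx hy fun t ht => hE (Set.mem_Ioi.2 (mul_pos hx ht)) (Set.mem_Ioi.2 (mul_pos hy ht))
      (mul_le_mul_of_nonneg_right hxy (Set.mem_Ioi.1 ht).le)
  have hanti (hE : AntitoneOn (fun t => σ * elasticity ψ t) (Set.Ioi 0)) :
      AntitoneOn (Kratio a b δ σ ψ h) (Set.Ioi 0) := fun x hx y hy hxy =>
    hK hy hx fun t ht => hE (Set.mem_Ioi.2 (mul_pos hx ht)) (Set.mem_Ioi.2 (mul_pos hy ht))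
      (mul_le_mul_of_nonneg_right hxy (Set.mem_Ioi.1 ht).le)
  exact ⟨fun hE => ⟨fun hσ => hmono ((monotone_mul_left_of_nonneg hσ.le).comp_monotoneOn hE),
      fun hσ => hanti ((antitone_mul_left hσ.le).comp_monotoneOn hE)⟩,
    fun hE => ⟨fun hσ => hanti ((monotone_mul_left_of_nonneg hσ.le).comp_antitoneOn hE),
      fun hσ => hmono ((antitone_mul_left hσ.le).comp_antitoneOn hE)⟩⟩

/-- Kernel version of Theorem 4: monotonicity of the ratio of two weighted integrals of a
nonnegative kernel `h` against powers of `ψ`. -/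
theorem kratio_monotonicity (a b δ σ : ℝ) (ψ h : ℝ → ℝ)
    (ha : 0 ≤ a) (hab : a < b) (hδ : 0 < δ) (hσ : σ ≠ 0)
    (hψpos : ∀ t ∈ Set.Ioi (0 : ℝ), 0 < ψ t)
    (hψdiff : ContDiffOn ℝ 2 ψ (Set.Ioi 0))
    (hh : ∀ t ∈ Set.Icc a b, 0 ≤ h t)
    (hhint : IntegrableOn h (Set.Icc a b))
    (hnum : ∀ z ∈ Set.Ioi (0 : ℝ),
      IntervalIntegrable (fun t => t ^ (δ - 1) * h t * (ψ (z * t)) ^ σ) volume a b)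
    (hden : ∀ z ∈ Set.Ioi (0 : ℝ),
      IntervalIntegrable (fun t => t ^ (-1 : ℝ) * h t * (ψ (z * t)) ^ σ) volume a b)
    (hdenpos : ∀ z ∈ Set.Ioi (0 : ℝ),
      0 < ∫ t in a..b, t ^ (-1 : ℝ) * h t * (ψ (z * t)) ^ σ) :
    (MonotoneOn (fun t => t * deriv ψ t / ψ t) (Set.Ioi 0) →
      ((0 < σ → MonotoneOn (Kratio a b δ σ ψ h) (Set.Ioi 0)) ∧
        (σ < 0 → AntitoneOn (Kratio a b δ σ ψ h) (Set.Ioi 0)))) ∧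
    (AntitoneOn (fun t => t * deriv ψ t / ψ t) (Set.Ioi 0) →
      ((0 < σ → AntitoneOn (Kratio a b δ σ ψ h) (Set.Ioi 0)) ∧
        (σ < 0 → MonotoneOn (Kratio a b δ σ ψ h) (Set.Ioi 0)))) :=
  kratio_monotonicity_general a b δ σ ψ h ha hab.le hδ.le hψpos
    (hψdiff.differentiableOn two_ne_zero) hh hnum hden hdenpos
end

section
/- Let c > b > 0, τ > 0 and δ > 0. Then the function z ↦ φ^τ(b+δτ, c+δτ, −z) / φ^τ(b, c, −z) is decreasing on (0,1). -/
/-- The τ-Kummer hypergeometric function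
`φ^τ(b,c,z) = ∑ₖ (Γ(b+kτ)/Γ(c+kτ)) · zᵏ/k!`. -/
noncomputable def kummerTau (τ b c z : ℝ) : ℝ :=
  ∑' k : ℕ, Real.Gamma (b + (k : ℝ) * τ) / Real.Gamma (c + (k : ℝ) * τ) * z ^ k /
    (Nat.factorial k : ℝ)

/-! Up to the factor `Γ(b) / Γ(c)`, the function `φ^τ(b, c, ·)` is the moment generating function of
`T ^ τ`, where `T` has the beta distribution with parameters `b` and `c - b`. Shifting `b` and `c`
by `s` multiplies the beta density by a multiple of `t ^ s`, so the ratio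
`φ^τ(b + s, c + s, z) / φ^τ(b, c, z)` is the mean of `T ^ s` under the beta law tilted by
`exp (z * T ^ τ)`. As `T ^ s` and `T ^ τ` increase together, Chebyshev's integral inequality shows
that this mean increases with `z`. -/

open MeasureTheory ProbabilityTheory Set

section Tilted

variable {α : Type*} [MeasurableSpace α] {μ : Measure α} {f g X Y : α → ℝ} {s : Set α}

theorem integral_mul_integral_le_of_monovaryOn_s2 [IsFiniteMeasure μ] (hs : ∀ᵐ x ∂μ, x ∈ s)
    (hfg : MonovaryOn f g s) (hf : Integrable f μ) (hg : Integrable g μ)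
    (hmul : Integrable (fun x ↦ f x * g x) μ) :
    (∫ x, f x ∂μ) * ∫ x, g x ∂μ ≤ μ.real univ * ∫ x, f x * g x ∂μ := by
  have h_nonneg : 0 ≤ ∫ p, (f p.2 - f p.1) * (g p.2 - g p.1) ∂μ.prod μ := by
    refine integral_nonneg_of_ae ?_
    filter_upwards [Measure.quasiMeasurePreserving_fst.ae hs,
      Measure.quasiMeasurePreserving_snd.ae hs] with p hp₁ hp₂
    exact monovaryOn_iff_forall_mul_nonneg.1 hfg hp₁ hp₂
  have h_expand : ∫ p, (f p.2 - f p.1) * (g p.2 - g p.1) ∂μ.prod μ =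
      2 * (μ.real univ * (∫ x, f x * g x ∂μ) - (∫ x, f x ∂μ) * ∫ x, g x ∂μ) := by
    calc
      _ = ∫ p, (f p.1 * g p.1 + f p.2 * g p.2) - (f p.1 * g p.2 + g p.1 * f p.2) ∂μ.prod μ := by
        congr 1 with p
        ring
      _ = _ := by
        rw [integral_sub ((hmul.comp_fst μ).fun_add (hmul.comp_snd μ))
            ((hf.mul_prod hg).fun_add (hg.mul_prod hf)),
          integral_add (hmul.comp_fst μ) (hmul.comp_snd μ),
          integral_add (hf.mul_prod hg) (hg.mul_prod hf), integral_prod_mul, integral_prod_mul,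
          integral_fun_fst (fun x ↦ f x * g x), integral_fun_snd (fun x ↦ f x * g x)]
        simp only [smul_eq_mul]
        ring
  linarith

theorem integral_le_integral_tilted_of_monovaryOn [IsProbabilityMeasure μ]
    (hs : ∀ᵐ x ∂μ, x ∈ s) (hYX : MonovaryOn Y X s) (hX : Integrable (fun x ↦ Real.exp (X x)) μ)
    (hY : Integrable Y μ) (hY_tilted : Integrable Y (μ.tilted X)) :
    ∫ x, Y x ∂μ ≤ ∫ x, Y x ∂μ.tilted X := by
  have hmul : Integrable (fun x ↦ Y x * Real.exp (X x)) μ := by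
    simpa only [smul_eq_mul, mul_comm] using (integrable_tilted_iff hX Y).1 hY_tilted
  have h_tilted : ∫ x, Y x ∂μ.tilted X =
      (∫ x, Y x * Real.exp (X x) ∂μ) / ∫ x, Real.exp (X x) ∂μ := by
    simp_rw [integral_tilted, smul_eq_mul, div_mul_eq_mul_div, integral_div, mul_comm]
  rw [h_tilted, le_div_iff₀ (integral_exp_pos hX)]
  simpa using integral_mul_integral_le_of_monovaryOn_s2 hs
    (hYX.comp_monotoneOn_right (Real.exp_monotone.monotoneOn _)) hY hX hmul

theorem monotoneOn_integral_tilted_mul (hs : ∀ᵐ x ∂μ, x ∈ s) (hYX : MonovaryOn Y X s)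
    (hY : ∀ z ∈ integrableExpSet X μ, Integrable Y (μ.tilted fun x ↦ z * X x)) :
    MonotoneOn (fun z ↦ ∫ x, Y x ∂μ.tilted fun x ↦ z * X x) (integrableExpSet X μ) := by
  intro z hz w hw hzw
  rcases eq_zero_or_neZero μ with rfl | hμ
  · simp
  have := isProbabilityMeasure_tilted (integrable_of_mem_integrableExpSet hz)
  have h_tilted : (μ.tilted fun x ↦ z * X x).tilted (fun x ↦ (w - z) * X x) =
      μ.tilted fun x ↦ w * X x := by
    rw [tilted_tilted (integrable_of_mem_integrableExpSet hz)]
    congr 1 with x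
    simp only [Pi.add_apply]
    ring
  have h_exp : Integrable (fun x ↦ Real.exp ((w - z) * X x)) (μ.tilted fun x ↦ z * X x) := by
    rw [integrable_tilted_iff (integrable_of_mem_integrableExpSet hz)]
    refine (integrable_of_mem_integrableExpSet hw).congr (ae_of_all _ fun x ↦ ?_)
    simp only [smul_eq_mul, ← Real.exp_add]
    ring_nf
  simp only [← h_tilted]
  refine integral_le_integral_tilted_of_monovaryOn
    ((tilted_absolutelyContinuous μ _).ae_le hs)
    (hYX.comp_monotoneOn_right ?_) h_exp (hY z hz) (h_tilted ▸ hY w hw)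
  exact (monotone_mul_left_of_nonneg (sub_nonneg.2 hzw)).monotoneOn _

theorem hasSum_mgf {z : ℝ} (hz : z ∈ integrableExpSet X μ) (hz_neg : -z ∈ integrableExpSet X μ) :
    HasSum (fun k : ℕ ↦ (∫ x, X x ^ k ∂μ) * z ^ k / k.factorial) (mgf X μ z) := by
  have h_exp (x : ℝ) : HasSum (fun k : ℕ ↦ x ^ k / k.factorial) (Real.exp x) := by
    simpa only [Real.exp_eq_exp_ℝ] using NormedSpace.expSeries_div_hasSum_exp x
  have h_meas : AEMeasurable (fun x ↦ z * X x) μ :=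
    Real.aemeasurable_of_aemeasurable_exp (integrable_of_mem_integrableExpSet hz).aemeasurable
  have h_bound : Integrable (fun x ↦ ∑' k : ℕ, |z * X x| ^ k / k.factorial) μ := by
    simpa only [(h_exp _).tsum_eq, abs_mul] using integrable_exp_abs_mul_abs hz hz_neg
  have h_sum : HasSum (fun k : ℕ ↦ ∫ x, (z * X x) ^ k / k.factorial ∂μ) (mgf X μ z) :=
    hasSum_integral_of_dominated_convergence (fun k x ↦ |z * X x| ^ k / k.factorial)
      (fun k ↦ ((h_meas.pow_const k).div_const _).aestronglyMeasurable)
      (fun k ↦ ae_of_all _ fun x ↦ by simp)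
      (ae_of_all _ fun x ↦ (h_exp _).summable) h_bound (ae_of_all _ fun x ↦ h_exp _)
  simpa only [mul_pow, integral_div, integral_const_mul, mul_comm] using h_sum

end Tilted

section Beta

variable {α β s τ : ℝ}

theorem measurable_betaPDF : Measurable (betaPDF α β) :=
  (measurable_betaPDFReal α β).ennreal_ofReal

theorem ae_betaMeasure_mem_Ioo : ∀ᵐ t ∂betaMeasure α β, t ∈ Ioo 0 1 := by
  rw [betaMeasure, ae_withDensity_iff measurable_betaPDF]
  refine ae_of_all _ fun t ht ↦ ⟨?_, ?_⟩ <;> by_contra! h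
  · exact ht (betaPDF_eq_zero_of_nonpos h)
  · exact ht (betaPDF_eq_zero_of_one_le h)

theorem integral_betaMeasure (hα : 0 < α) (hβ : 0 < β) (f : ℝ → ℝ) :
    ∫ t, f t ∂betaMeasure α β = ∫ t, betaPDFReal α β t * f t := by
  have h_nonneg (t : ℝ) : 0 ≤ betaPDFReal α β t := by
    by_cases ht : 0 < t ∧ t < 1
    · exact (betaPDFReal_pos ht.1 ht.2 hα hβ).le
    · simp [betaPDFReal, ht]
  rw [betaMeasure, integral_withDensity_eq_integral_toReal_smul
    measurable_betaPDF (by simp [betaPDF])]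
  simp [betaPDF, ENNReal.toReal_ofReal (h_nonneg _)]

theorem betaPDFReal_mul_rpow (hαs : 0 < α + s) (hβ : 0 < β) (t : ℝ) :
    betaPDFReal α β t * t ^ s = beta (α + s) β / beta α β * betaPDFReal (α + s) β t := by
  by_cases ht : 0 < t ∧ t < 1
  · have h_pow : t ^ (α + s - 1) = t ^ (α - 1) * t ^ s := by
      rw [← Real.rpow_add ht.1, sub_add_eq_add_sub]
    have h_beta : beta (α + s) β ≠ 0 := (beta_pos hαs hβ).ne'
    simp only [betaPDFReal, ht, and_self, if_true, h_pow]
    field_simp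
  · simp [betaPDFReal, ht]

theorem integral_rpow_mul_betaMeasure (hα : 0 < α) (hαs : 0 < α + s) (hβ : 0 < β) (f : ℝ → ℝ) :
    ∫ t, t ^ s * f t ∂betaMeasure α β =
      beta (α + s) β / beta α β * ∫ t, f t ∂betaMeasure (α + s) β := by
  simp_rw [integral_betaMeasure hα hβ, integral_betaMeasure hαs hβ, ← mul_assoc,
    betaPDFReal_mul_rpow hαs hβ, mul_assoc, integral_const_mul]

theorem integral_rpow_betaMeasure (hα : 0 < α) (hαs : 0 < α + s) (hβ : 0 < β) :
    ∫ t, t ^ s ∂betaMeasure α β = beta (α + s) β / beta α β := by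
  have := isProbabilityMeasureBeta hαs hβ
  simpa using integral_rpow_mul_betaMeasure hα hαs hβ 1

theorem ae_betaMeasure_rpow_mem_Icc (hs : 0 ≤ s) :
    ∀ᵐ t ∂betaMeasure α β, t ^ s ∈ Icc (0 : ℝ) 1 := by
  filter_upwards [ae_betaMeasure_mem_Ioo] with t ht
  exact ⟨Real.rpow_nonneg ht.1.le s, Real.rpow_le_one ht.1.le ht.2.le hs⟩

theorem integrableExpSet_rpow_betaMeasure (hα : 0 < α) (hβ : 0 < β) (hτ : 0 ≤ τ) :
    integrableExpSet (fun t ↦ t ^ τ) (betaMeasure α β) = univ := by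
  have := isProbabilityMeasureBeta hα hβ
  exact eq_univ_of_forall fun z ↦
    integrable_exp_mul_of_mem_Icc (by fun_prop) (ae_betaMeasure_rpow_mem_Icc hτ)

theorem monotone_integral_rpow_betaMeasure_tilted (hα : 0 < α) (hβ : 0 < β) (hs : 0 ≤ s)
    (hτ : 0 ≤ τ) :
    Monotone fun z : ℝ ↦ ∫ t, t ^ s ∂(betaMeasure α β).tilted fun t ↦ z * t ^ τ := by
  have h_univ := integrableExpSet_rpow_betaMeasure hα hβ hτ
  have := isProbabilityMeasureBeta hα hβ
  have h_monovary : MonovaryOn (fun t : ℝ ↦ t ^ s) (fun t ↦ t ^ τ) (Ioo 0 1) :=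
    ((Real.monotoneOn_rpow_Ici_of_exponent_nonneg hs).mono fun t ht ↦ ht.1.le).monovaryOn
      ((Real.monotoneOn_rpow_Ici_of_exponent_nonneg hτ).mono fun t ht ↦ ht.1.le)
  rw [← monotoneOn_univ, ← h_univ]
  refine monotoneOn_integral_tilted_mul ae_betaMeasure_mem_Ioo h_monovary fun z hz ↦ ?_
  have := isProbabilityMeasure_tilted (integrable_of_mem_integrableExpSet hz)
  exact .of_mem_Icc 0 1 (by fun_prop)
    ((tilted_absolutelyContinuous _ _).ae_le (ae_betaMeasure_rpow_mem_Icc hs))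

end Beta

section Kummer

variable {b c s τ : ℝ}

theorem beta_add_sub_div_beta_sub (hbc : b < c) :
    beta (b + s) (c - b) / beta b (c - b) =
      Real.Gamma c / Real.Gamma b * (Real.Gamma (b + s) / Real.Gamma (c + s)) := by
  have hΓ : Real.Gamma (c - b) ≠ 0 := (Real.Gamma_pos_of_pos (sub_pos.2 hbc)).ne'
  rw [beta, beta, add_sub_cancel, show b + s + (c - b) = c + s by ring]
  field_simp

theorem kummerTau_eq_mgf (hb : 0 < b) (hbc : b < c) (hτ : 0 ≤ τ) (z : ℝ) :
    kummerTau τ b c z =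
      Real.Gamma b / Real.Gamma c * mgf (fun t ↦ t ^ τ) (betaMeasure b (c - b)) z := by
  have hβ : 0 < c - b := sub_pos.2 hbc
  have hΓb := (Real.Gamma_pos_of_pos hb).ne'
  have hΓc := (Real.Gamma_pos_of_pos (hb.trans hbc)).ne'
  have h_moment (k : ℕ) : ∫ t, (t ^ τ) ^ k ∂betaMeasure b (c - b) =
      Real.Gamma c / Real.Gamma b * (Real.Gamma (b + k * τ) / Real.Gamma (c + k * τ)) := by
    rw [← beta_add_sub_div_beta_sub hbc, ← integral_rpow_betaMeasure hb (by positivity) hβ]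
    refine integral_congr_ae ?_
    filter_upwards [ae_betaMeasure_mem_Ioo] with t ht
    rw [← Real.rpow_mul_natCast ht.1.le, mul_comm]
  have h_mem (z : ℝ) : z ∈ integrableExpSet (fun t ↦ t ^ τ) (betaMeasure b (c - b)) :=
    integrableExpSet_rpow_betaMeasure hb hβ hτ ▸ mem_univ z
  rw [← (hasSum_mgf (h_mem z) (h_mem (-z))).tsum_eq, ← tsum_mul_left, kummerTau]
  refine tsum_congr fun k ↦ ?_
  rw [h_moment]
  field_simp

theorem kummerTau_ratio_eq_integral_tilted (hb : 0 < b) (hbc : b < c) (hbs : 0 < b + s)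
    (hτ : 0 ≤ τ) (z : ℝ) :
    kummerTau τ (b + s) (c + s) z / kummerTau τ b c z =
      ∫ t, t ^ s ∂(betaMeasure b (c - b)).tilted fun t ↦ z * t ^ τ := by
  rw [kummerTau_eq_mgf hbs (by linarith) hτ, kummerTau_eq_mgf hb hbc hτ, add_sub_add_right_eq_sub,
    integral_tilted_mul_eq_mgf]
  simp_rw [smul_eq_mul, div_mul_eq_mul_div, integral_div, mul_comm (Real.exp _)]
  rw [integral_rpow_mul_betaMeasure hb hbs (sub_pos.2 hbc), beta_add_sub_div_beta_sub hbc, mgf]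
  field_simp

theorem kummerTau_ratio_antitone_general (hb : 0 < b) (hbc : b < c) (hs : 0 ≤ s) (hτ : 0 ≤ τ) :
    Antitone fun z ↦ kummerTau τ (b + s) (c + s) (-z) / kummerTau τ b c (-z) := by
  have hbs : 0 < b + s := by positivity
  simp only [kummerTau_ratio_eq_integral_tilted hb hbc hbs hτ]
  exact (monotone_integral_rpow_betaMeasure_tilted hb (sub_pos.2 hbc) hs hτ).comp_antitone
    fun _ _ h ↦ neg_le_neg h

end Kummer

/-- The ratio `z ↦ φ^τ(b+δτ, c+δτ, −z) / φ^τ(b, c, −z)` is decreasing on (0,1). -/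
theorem kummerTau_ratio_antitone (b c τ δ : ℝ)
    (hb : 0 < b) (hbc : b < c) (hτ : 0 < τ) (hδ : 0 < δ) :
    AntitoneOn (fun z => kummerTau τ (b + δ * τ) (c + δ * τ) (-z) / kummerTau τ b c (-z))
      (Set.Ioo 0 1) :=
  (kummerTau_ratio_antitone_general hb hbc (mul_pos hδ hτ).le hτ.le).antitoneOn _
end
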